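/- Let A = kQ/I be a symmetric special biserial algebra with Q a connected quiver and I an admissible ideal. Suppose u = u₁u₂⋯u_r is a product of arrows of Q whose image in A is nonzero and which satisfies uδ = 0 in A for every arrow δ. Then: (1) δu = 0 in A for every arrow δ; (2) u is a cycle, i.e., the initial vertex of u₁ equals the terminal vertex of u_r; (3) if v = v₁v₂⋯v_s is another product of arrows, nonzero in A, with vδ = 0 in A for every arrow δ, and u₁ = v₁, then r = s and u_i = v_i for all i; (4) if v = v₁v₂⋯v_s is a product of arrows, nonzero in A, with vδ = 0 in A for every arrow δ, and the initial vertex of v₁ equals the initial vertex of u₁, then u = cv in A for some nonzero scalar c ∈ k; (5) if Tr : A → k is a k-linear map with Tr(ab) = Tr(ba) for all a, b and non-degenerate associated bilinear form, then Tr(u) ≠ 0. -/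

import Mathlib

namespace QH
noncomputable section
section



/-! ### Path algebras of quivers, admissible ideals, special biserial algebras -/

/-- Generators for the path algebra of a quiver: an idempotent for each vertex and a generator
for each arrow. -/
inductive PGen (V E : Type) : Type
  | vert : V → PGen V E
  | arr : E → PGen V E

/-- Defining relations of the path algebra `kQ` of the quiver `Q = (V, E, s, t)`:
the vertex idempotents are orthogonal idempotents summing to `1`, and
`e_{s(a)} · a = a = a · e_{t(a)}` for every arrow `a` (paths composed left to right). -/
inductive PathRel (k : Type) [CommRing k] (V E : Type) [Fintype V] [DecidableEq V] (s t : E → V) :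
    FreeAlgebra k (PGen V E) → FreeAlgebra k (PGen V E) → Prop
  | vv (x y : V) : PathRel k V E s t
      (FreeAlgebra.ι k (PGen.vert x) * FreeAlgebra.ι k (PGen.vert y))
      (if x = y then FreeAlgebra.ι k (PGen.vert x) else 0)
  | sum_v : PathRel k V E s t (∑ x : V, FreeAlgebra.ι k (PGen.vert x)) 1
  | src (e : E) : PathRel k V E s t
      (FreeAlgebra.ι k (PGen.vert (s e)) * FreeAlgebra.ι k (PGen.arr e))
      (FreeAlgebra.ι k (PGen.arr e))
  | tgt (e : E) : PathRel k V E s t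
      (FreeAlgebra.ι k (PGen.arr e) * FreeAlgebra.ι k (PGen.vert (t e)))
      (FreeAlgebra.ι k (PGen.arr e))

/-- The path algebra `kQ` of a finite quiver. -/
abbrev PathAlg (k : Type) [CommRing k] (V E : Type) [Fintype V] [DecidableEq V] (s t : E → V) : Type :=
  RingQuot (PathRel k V E s t)

/-- The image in `kQ` of a vertex idempotent. -/
def pV (k : Type) [CommRing k] {V E : Type} [Fintype V] [DecidableEq V] (s t : E → V) (x : V) :
    PathAlg k V E s t := RingQuot.mkAlgHom k _ (FreeAlgebra.ι k (PGen.vert x))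

/-- The image in `kQ` of an arrow. -/
def pA (k : Type) [CommRing k] {V E : Type} [Fintype V] [DecidableEq V] (s t : E → V) (e : E) :
    PathAlg k V E s t := RingQuot.mkAlgHom k _ (FreeAlgebra.ι k (PGen.arr e))

/-- The arrow ideal `kQ⁺` of the path algebra (the two-sided ideal generated by the arrows),
as a `k`-submodule. -/
def arrowIdeal (k : Type) [CommRing k] {V E : Type} [Fintype V] [DecidableEq V] (s t : E → V) :
    Submodule k (PathAlg k V E s t) :=
  ⊤ * Submodule.span k (Set.range (pA k s t)) * ⊤

/-- A `k`-submodule of an algebra is a two-sided ideal. -/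
def IsTwoSidedSub {k A : Type} [CommRing k] [Ring A] [Algebra k A] (I : Submodule k A) : Prop :=
  ∀ x ∈ I, ∀ a : A, a * x ∈ I ∧ x * a ∈ I

/-- An ideal `I ⊆ kQ` is admissible if it is two-sided and `(kQ⁺)^N ⊆ I ⊆ (kQ⁺)²`
for some `N`. -/
def IsAdmissible (k : Type) [CommRing k] {V E : Type} [Fintype V] [DecidableEq V] (s t : E → V)
    (I : Submodule k (PathAlg k V E s t)) : Prop :=
  IsTwoSidedSub I ∧ I ≤ arrowIdeal k s t ^ 2 ∧ ∃ N : ℕ, arrowIdeal k s t ^ N ≤ I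

/-- The quotient algebra `kQ/I`. -/
abbrev PathQuot (k : Type) [CommRing k] {V E : Type} [Fintype V] [DecidableEq V] (s t : E → V)
    (I : Submodule k (PathAlg k V E s t)) : Type :=
  RingQuot (fun a b : PathAlg k V E s t => a - b ∈ I)

/-- The quotient map `kQ → kQ/I`. -/
def pathQuotMap (k : Type) [CommRing k] {V E : Type} [Fintype V] [DecidableEq V] (s t : E → V)
    (I : Submodule k (PathAlg k V E s t)) : PathAlg k V E s t →ₐ[k] PathQuot k s t I :=
  RingQuot.mkAlgHom k _

/-- A quiver is connected if its underlying undirected graph is. -/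
def QConnected {V E : Type} (s t : E → V) : Prop :=
  ∀ v w : V, Relation.ReflTransGen (fun a b => ∃ e, (s e = a ∧ t e = b) ∨ (s e = b ∧ t e = a)) v w

/-- A surjection `π : kQ → A` presents `A` as a special biserial algebra if at most two arrows
start and at most two arrows end at each vertex, and for each arrow `α` there is at most one
arrow `β` with `αβ ∉ ker π` and at most one arrow `γ` with `γα ∉ ker π`. -/
def SpecialBiserialPres (k : Type) [CommRing k] {V E : Type} [Fintype V] [Fintype E]
    [DecidableEq V] [DecidableEq E] (s t : E → V) {A : Type} [Ring A] [Algebra k A]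
    (π : PathAlg k V E s t →ₐ[k] A) : Prop :=
  (∀ v : V, (Finset.univ.filter fun e : E => s e = v).card ≤ 2) ∧
  (∀ v : V, (Finset.univ.filter fun e : E => t e = v).card ≤ 2) ∧
  (∀ e f f' : E, π (pA k s t e * pA k s t f) ≠ 0 → π (pA k s t e * pA k s t f') ≠ 0 → f = f') ∧
  (∀ e f f' : E, π (pA k s t f * pA k s t e) ≠ 0 → π (pA k s t f' * pA k s t e) ≠ 0 → f = f')

/-- The algebra presented by a quiver together with a set of relations. -/
inductive PresRel (k : Type) [CommRing k] (V E : Type) [Fintype V] [DecidableEq V] (s t : E → V)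
    (rels : Set (FreeAlgebra k (PGen V E))) :
    FreeAlgebra k (PGen V E) → FreeAlgebra k (PGen V E) → Prop
  | base {x y : FreeAlgebra k (PGen V E)} : PathRel k V E s t x y → PresRel k V E s t rels x y
  | rel {x : FreeAlgebra k (PGen V E)} : x ∈ rels → PresRel k V E s t rels x 0

/-- The quotient of the path algebra `kQ` by the two-sided ideal generated by `rels`. -/
abbrev PresAlg (k : Type) [CommRing k] (V E : Type) [Fintype V] [DecidableEq V] (s t : E → V)
    (rels : Set (FreeAlgebra k (PGen V E))) : Type :=
  RingQuot (PresRel k V E s t rels)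

/-- The canonical map `kQ → kQ/(rels)`. -/
def presQuotMap (k : Type) [CommRing k] {V E : Type} [Fintype V] [DecidableEq V] (s t : E → V)
    (rels : Set (FreeAlgebra k (PGen V E))) : PathAlg k V E s t →ₐ[k] PresAlg k V E s t rels :=
  RingQuot.liftAlgHom k ⟨RingQuot.mkAlgHom k _,
    fun _ _ h => RingQuot.mkAlgHom_rel k (PresRel.base h)⟩

/-- The two-sided ideal of `kQ` generated by the set of relations `rels` is admissible. -/
def RelsAdmissible (k : Type) [CommRing k] {V E : Type} [Fintype V] [DecidableEq V] (s t : E → V)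
    (rels : Set (FreeAlgebra k (PGen V E))) : Prop :=
  IsAdmissible k s t
    ((RingHom.ker (presQuotMap k s t rels).toRingHom).restrictScalars k)

end

/-- The image in `A = kQ/I` of the path `u = u₁ u₂ ⋯ u_r` given by a list of arrows. -/
def prodPath (k : Type) [CommRing k] {nV mE : ℕ} (s t : Fin mE → Fin nV)
    (I : Submodule k (PathAlg k (Fin nV) (Fin mE) s t)) (L : List (Fin mE)) :
    PathQuot k s t I :=
  (L.map fun e => pathQuotMap k s t I (pA k s t e)).prod

/-- A `k`-algebra `A` is a symmetric algebra if it has a trace form. -/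
def IsSymmetricAlgebra' (k A : Type) [CommRing k] [Ring A] [Algebra k A] : Prop :=
  ∃ Tr : A →ₗ[k] k, (∀ a b : A, Tr (a * b) = Tr (b * a)) ∧
    ∀ a : A, a ≠ 0 → ∃ b : A, Tr (a * b) ≠ 0

/-!
Write `u` for the given path and `e_y` for the vertex idempotent at its end, so `u = u e_y`.
As `u` kills all arrows on the right, `u A = k u`. A non-degenerate form `Tr` does not vanish on
the right ideal `u A`, so `Tr u ≠ 0`; in other words, an element ending at a single vertex and
killed by all arrows on the right is determined by its trace.

Applied to `δ u`, whose trace is `Tr (u δ) = 0`, this gives `δ u = 0`. If `u = e_x u` with `x ≠ y`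
then `Tr u = Tr (u e_y e_x) = 0`, so `u` must be a cycle. If `u` and `v` both end at `x` then
`Tr v • u - Tr u • v` has trace zero, so `u` and `v` are proportional. Finally, each arrow has at
most one nonzero continuation, so of two nonzero paths with the same first arrow one is a prefix of
the other, and maximality makes them equal.
-/

section PathAlgebra

variable {k : Type} [CommRing k] {V E : Type} [Fintype V] [DecidableEq V] {s t : E → V}

lemma pV_mul_pV_of_ne {x y : V} (h : x ≠ y) : pV k s t x * pV k s t y = 0 := by
  have hrel := RingQuot.mkAlgHom_rel k (PathRel.vv (k := k) (s := s) (t := t) x y)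
  rwa [if_neg h, map_mul, map_zero] at hrel

lemma pV_source_mul_pA (e : E) : pV k s t (s e) * pA k s t e = pA k s t e := by
  have hrel := RingQuot.mkAlgHom_rel k (PathRel.src (k := k) (s := s) (t := t) e)
  rwa [map_mul] at hrel

lemma pA_mul_pV_target (e : E) : pA k s t e * pV k s t (t e) = pA k s t e := by
  have hrel := RingQuot.mkAlgHom_rel k (PathRel.tgt (k := k) (s := s) (t := t) e)
  rwa [map_mul] at hrel

lemma pathAlg_induction {motive : PathAlg k V E s t → Prop}
    (algebraMap : ∀ r : k, motive (algebraMap k _ r)) (vertex : ∀ x, motive (pV k s t x))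
    (arrow : ∀ e, motive (pA k s t e)) (mul : ∀ p q, motive p → motive q → motive (p * q))
    (add : ∀ p q, motive p → motive q → motive (p + q)) (p : PathAlg k V E s t) : motive p := by
  obtain ⟨p, rfl⟩ := RingQuot.mkAlgHom_surjective k _ p
  induction p using FreeAlgebra.induction with
  | grade0 r => simpa only [AlgHom.commutes] using algebraMap r
  | grade1 g => cases g with
    | vert x => exact vertex x
    | arr e => exact arrow e
  | mul p q hp hq => simpa only [map_mul] using mul _ _ hp hq
  | add p q hp hq => simpa only [map_add] using add _ _ hp hq

end PathAlgebra

section UniqueContinuation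

lemma prefix_or_prefix_of_isChain {α : Type*} {r : α → α → Prop} (hr : Relator.RightUnique r)
    {a : α} {M M' : List α} (hM : (a :: M).IsChain r) (hM' : (a :: M').IsChain r) :
    M <+: M' ∨ M' <+: M := by
  induction M generalizing a M' with
  | nil => exact .inl List.nil_prefix
  | cons b M ih =>
    cases M' with
    | nil => exact .inr List.nil_prefix
    | cons c M' =>
      rw [List.isChain_cons_cons] at hM hM'
      obtain rfl : b = c := hr hM.1 hM'.1
      simpa only [List.cons_prefix_cons, true_and] using ih hM.2 hM'.2

variable {R α : Type*} [MonoidWithZero R] {f : α → R}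

lemma isChain_of_prod_map_ne_zero {M : List α} (hM : (M.map f).prod ≠ 0) :
    M.IsChain fun a b => f a * f b ≠ 0 := by
  induction M with
  | nil => exact .nil
  | cons a M ih =>
    rw [List.map_cons, List.prod_cons] at hM
    cases M with
    | nil => exact .singleton a
    | cons b M =>
      refine List.isChain_cons_cons.2 ⟨fun hab => hM ?_, ih (right_ne_zero_of_mul hM)⟩
      rw [List.map_cons, List.prod_cons, ← mul_assoc, hab, zero_mul]

lemma eq_of_prefix_of_prod_map_ne_zero {M M' : List α} (hprefix : M <+: M')
    (hmax : ∀ a, (M.map f).prod * f a = 0) (hM' : (M'.map f).prod ≠ 0) : M = M' := by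
  obtain ⟨D, rfl⟩ := hprefix
  cases D with
  | nil => exact (List.append_nil M).symm
  | cons d D =>
    refine absurd ?_ hM'
    rw [List.map_append, List.prod_append, List.map_cons, List.prod_cons, ← mul_assoc, hmax,
      zero_mul]

lemma eq_of_head_eq_of_maximal (hf : ∀ a b c, f a * f b ≠ 0 → f a * f c ≠ 0 → b = c)
    {M M' : List α} (hne : M ≠ []) (hne' : M' ≠ [])
    (hM : (M.map f).prod ≠ 0) (hM' : (M'.map f).prod ≠ 0)
    (hmax : ∀ a, (M.map f).prod * f a = 0) (hmax' : ∀ a, (M'.map f).prod * f a = 0)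
    (hhead : M.head hne = M'.head hne') : M = M' := by
  have hprefix : M <+: M' ∨ M' <+: M := by
    obtain ⟨a, N, rfl⟩ := List.exists_cons_of_ne_nil hne
    obtain ⟨b, N', rfl⟩ := List.exists_cons_of_ne_nil hne'
    obtain rfl : a = b := hhead
    simpa only [List.cons_prefix_cons, true_and] using
      prefix_or_prefix_of_isChain (fun {a b c} => hf a b c)
        (isChain_of_prod_map_ne_zero hM) (isChain_of_prod_map_ne_zero hM')
  rcases hprefix with h | h
  · exact eq_of_prefix_of_prod_map_ne_zero h hmax hM'
  · exact (eq_of_prefix_of_prod_map_ne_zero h hmax' hM).symm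

end UniqueContinuation

section Socle

variable {k : Type} [CommRing k] {V E : Type} [Fintype V] [DecidableEq V] {s t : E → V}
  {A : Type*} [Ring A] [Algebra k A] {π : PathAlg k V E s t →ₐ[k] A} {x y : V} {u v w : A}

/-- The elements of `A` that end at the vertex `x` and are annihilated on the right by every arrow.
If `A = kQ/I` with `I` admissible, this is `soc(A) e_x`, the socle being that of the right module
`A`. As a Mathlib `Ideal`, it is a left ideal. -/
def socleAt (π : PathAlg k V E s t →ₐ[k] A) (x : V) : Ideal A where
  carrier := {w | w * π (pV k s t x) = w ∧ ∀ d, w * π (pA k s t d) = 0}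
  add_mem' {v w} hv hw :=
    ⟨by rw [add_mul, hv.1, hw.1], fun d => by rw [add_mul, hv.2, hw.2, add_zero]⟩
  zero_mem' := ⟨zero_mul _, fun _ => zero_mul _⟩
  smul_mem' a w hw :=
    ⟨by rw [smul_mul_assoc, hw.1], fun d => by rw [smul_mul_assoc, hw.2, smul_zero]⟩

lemma exists_mul_eq_smul_of_mem_socleAt (hπ : Function.Surjective π) (hw : w ∈ socleAt π x)
    (b : A) : ∃ c : k, w * b = c • w := by
  obtain ⟨p, rfl⟩ := hπ b
  induction p using pathAlg_induction with
  | algebraMap r => exact ⟨r, by rw [AlgHom.commutes, ← Algebra.commutes, Algebra.smul_def]⟩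
  | vertex y =>
    obtain rfl | hxy := eq_or_ne x y
    · exact ⟨1, by rw [hw.1, one_smul]⟩
    · exact ⟨0, by
        rw [← hw.1, mul_assoc, ← map_mul, pV_mul_pV_of_ne hxy, map_zero, mul_zero, zero_smul]⟩
  | arrow e => exact ⟨0, by rw [hw.2, zero_smul]⟩
  | mul p q hp hq =>
    obtain ⟨c, hc⟩ := hp
    obtain ⟨d, hd⟩ := hq
    exact ⟨c * d, by rw [map_mul, ← mul_assoc, hc, smul_mul_assoc, hd, smul_smul]⟩
  | add p q hp hq =>
    obtain ⟨c, hc⟩ := hp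
    obtain ⟨d, hd⟩ := hq
    exact ⟨c + d, by rw [map_add, mul_add, hc, hd, add_smul]⟩

variable {Tr : A →ₗ[k] k}

lemma trace_ne_zero_of_mem_socleAt (hπ : Function.Surjective π)
    (hnondeg : ∀ a, a ≠ 0 → ∃ b, Tr (a * b) ≠ 0) (hw : w ∈ socleAt π x) (hw0 : w ≠ 0) :
    Tr w ≠ 0 := by
  intro hTr
  obtain ⟨b, hb⟩ := hnondeg w hw0
  obtain ⟨c, hc⟩ := exists_mul_eq_smul_of_mem_socleAt hπ hw b
  exact hb (by rw [hc, map_smul, hTr, smul_zero])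

lemma arrow_mul_eq_zero_of_mem_socleAt (hπ : Function.Surjective π)
    (hcomm : ∀ a b, Tr (a * b) = Tr (b * a)) (hnondeg : ∀ a, a ≠ 0 → ∃ b, Tr (a * b) ≠ 0)
    (hw : w ∈ socleAt π x) (d : E) : π (pA k s t d) * w = 0 := by
  by_contra hne
  refine trace_ne_zero_of_mem_socleAt hπ hnondeg (Ideal.mul_mem_left _ _ hw) hne ?_
  rw [hcomm, hw.2, map_zero]

lemma eq_of_mem_socleAt_of_vertex_mul_eq (hπ : Function.Surjective π)
    (hcomm : ∀ a b, Tr (a * b) = Tr (b * a)) (hnondeg : ∀ a, a ≠ 0 → ∃ b, Tr (a * b) ≠ 0)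
    (hw : w ∈ socleAt π y) (hw0 : w ≠ 0) (hx : π (pV k s t x) * w = w) : x = y := by
  by_contra hxy
  refine trace_ne_zero_of_mem_socleAt hπ hnondeg hw hw0 ?_
  calc Tr w = Tr (w * π (pV k s t x)) := by rw [← hcomm, hx]
    _ = Tr (w * π (pV k s t y * pV k s t x)) := by rw [map_mul π, ← mul_assoc, hw.1]
    _ = 0 := by rw [pV_mul_pV_of_ne (Ne.symm hxy), map_zero, mul_zero, map_zero]

lemma trace_smul_comm_of_mem_socleAt (hπ : Function.Surjective π)
    (hnondeg : ∀ a, a ≠ 0 → ∃ b, Tr (a * b) ≠ 0)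
    (hu : u ∈ socleAt π x) (hv : v ∈ socleAt π x) : Tr v • u = Tr u • v := by
  by_contra hne
  have hmem : Tr v • u - Tr u • v ∈ socleAt π x :=
    sub_mem (Submodule.smul_of_tower_mem _ _ hu) (Submodule.smul_of_tower_mem _ _ hv)
  refine trace_ne_zero_of_mem_socleAt hπ hnondeg hmem (sub_ne_zero.2 hne) ?_
  rw [map_sub, map_smul, map_smul, smul_eq_mul, smul_eq_mul, mul_comm, sub_self]

end Socle

lemma exists_eq_smul_of_mem_socleAt {k : Type} [Field k] {V E : Type} [Fintype V] [DecidableEq V]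
    {s t : E → V} {A : Type*} [Ring A] [Algebra k A] {π : PathAlg k V E s t →ₐ[k] A} {x : V}
    {u v : A} {Tr : A →ₗ[k] k} (hπ : Function.Surjective π)
    (hnondeg : ∀ a, a ≠ 0 → ∃ b, Tr (a * b) ≠ 0)
    (hu : u ∈ socleAt π x) (hu0 : u ≠ 0) (hv : v ∈ socleAt π x) (hv0 : v ≠ 0) :
    ∃ c : k, c ≠ 0 ∧ u = c • v := by
  have hTru := trace_ne_zero_of_mem_socleAt hπ hnondeg hu hu0
  have hTrv := trace_ne_zero_of_mem_socleAt hπ hnondeg hv hv0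
  refine ⟨(Tr v)⁻¹ * Tr u, mul_ne_zero (inv_ne_zero hTrv) hTru, ?_⟩
  rw [mul_smul, ← trace_smul_comm_of_mem_socleAt hπ hnondeg hu hv, inv_smul_smul₀ hTrv]

section Paths

variable {k : Type} [CommRing k] {V E : Type} [Fintype V] [DecidableEq V] {s t : E → V}
  {A : Type*} [Ring A] [Algebra k A] {π : PathAlg k V E s t →ₐ[k] A} {L : List E}

/-- The image in `A` of a product of arrows, for an arbitrary algebra map `π : kQ → A`; for the
quotient map `kQ → kQ/I` it is `prodPath`. The arrows need not be composable. -/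
def arrowProd (π : PathAlg k V E s t →ₐ[k] A) (L : List E) : A :=
  (L.map fun e => π (pA k s t e)).prod

lemma vertex_head_mul_arrowProd (hL : L ≠ []) :
    π (pV k s t (s (L.head hL))) * arrowProd π L = arrowProd π L := by
  obtain ⟨a, M, rfl⟩ := List.exists_cons_of_ne_nil hL
  rw [arrowProd, List.map_cons, List.prod_cons, List.head_cons, ← mul_assoc, ← map_mul,
    pV_source_mul_pA]

lemma arrowProd_mul_vertex_getLast (hL : L ≠ []) :
    arrowProd π L * π (pV k s t (t (L.getLast hL))) = arrowProd π L := by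
  obtain ⟨M, a, rfl⟩ := (List.eq_nil_or_concat' L).resolve_left hL
  rw [arrowProd, List.map_append, List.prod_append, List.map_singleton, List.prod_singleton,
    List.getLast_append_singleton, mul_assoc, ← map_mul, pA_mul_pV_target]

lemma arrowProd_mem_socleAt (hL : L ≠ []) (hmax : ∀ d, arrowProd π L * π (pA k s t d) = 0) :
    arrowProd π L ∈ socleAt π (t (L.getLast hL)) :=
  ⟨arrowProd_mul_vertex_getLast hL, hmax⟩

lemma source_head_eq_target_getLast {Tr : A →ₗ[k] k} (hπ : Function.Surjective π)
    (hcomm : ∀ a b, Tr (a * b) = Tr (b * a)) (hnondeg : ∀ a, a ≠ 0 → ∃ b, Tr (a * b) ≠ 0)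
    (hL : L ≠ []) (hu : arrowProd π L ≠ 0) (hmax : ∀ d, arrowProd π L * π (pA k s t d) = 0) :
    s (L.head hL) = t (L.getLast hL) :=
  eq_of_mem_socleAt_of_vertex_mul_eq hπ hcomm hnondeg (arrowProd_mem_socleAt hL hmax) hu
    (vertex_head_mul_arrowProd hL)

end Paths

theorem statement17_general {k : Type} [Field k] {V E : Type} [Fintype V] [DecidableEq V]
    {s t : E → V} {A : Type} [Ring A] [Algebra k A] (π : PathAlg k V E s t →ₐ[k] A)
    (hπ : Function.Surjective π) (hsym : IsSymmetricAlgebra' k A)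
    (hunique : ∀ e f f', π (pA k s t e * pA k s t f) ≠ 0 → π (pA k s t e * pA k s t f') ≠ 0 →
      f = f')
    (L : List E) (hL : L ≠ []) (hu : arrowProd π L ≠ 0)
    (hmax : ∀ d, arrowProd π L * π (pA k s t d) = 0) :
    (∀ d, π (pA k s t d) * arrowProd π L = 0) ∧
    s (L.head hL) = t (L.getLast hL) ∧
    (∀ (L' : List E) (hL' : L' ≠ []), arrowProd π L' ≠ 0 →
      (∀ d, arrowProd π L' * π (pA k s t d) = 0) → L.head hL = L'.head hL' → L = L') ∧
    (∀ (L' : List E) (hL' : L' ≠ []), arrowProd π L' ≠ 0 →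
      (∀ d, arrowProd π L' * π (pA k s t d) = 0) → s (L'.head hL') = s (L.head hL) →
      ∃ c : k, c ≠ 0 ∧ arrowProd π L = c • arrowProd π L') ∧
    (∀ Tr : A →ₗ[k] k, (∀ a, a ≠ 0 → ∃ b, Tr (a * b) ≠ 0) → Tr (arrowProd π L) ≠ 0) := by
  obtain ⟨Tr, hcomm, hnondeg⟩ := hsym
  have hmem := arrowProd_mem_socleAt hL hmax
  have hcycle := source_head_eq_target_getLast hπ hcomm hnondeg hL hu hmax
  refine ⟨arrow_mul_eq_zero_of_mem_socleAt hπ hcomm hnondeg hmem, hcycle, ?_, ?_, ?_⟩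
  · intro L' hL' hv hmax' hhead
    simp only [map_mul] at hunique
    exact eq_of_head_eq_of_maximal hunique hL hL' hu hv hmax hmax' hhead
  · intro L' hL' hv hmax' hstart
    have hcycle' := source_head_eq_target_getLast hπ hcomm hnondeg hL' hv hmax'
    have hmem' : arrowProd π L' ∈ socleAt π (t (L.getLast hL)) := by
      rw [← hcycle, ← hstart, hcycle']
      exact arrowProd_mem_socleAt hL' hmax'
    exact exists_eq_smul_of_mem_socleAt hπ hnondeg hmem hu hmem' hv
  · intro Tr hnondeg
    exact trace_ne_zero_of_mem_socleAt hπ hnondeg hmem hu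

/-- Let `A = kQ/I` be a symmetric special biserial algebra (`Q` connected,
`I` admissible) and let `u = u₁⋯u_r` be a product of arrows which is nonzero in `A` and
satisfies `uδ = 0` for every arrow `δ`.  Then: (1) `δu = 0` for every arrow `δ`; (2) `u` is a
cycle; (3) such a `u` is determined by its first arrow; (4) two such `u, v` starting at the
same vertex agree up to a nonzero scalar; (5) `Tr(u) ≠ 0` for every non-degenerate symmetric
trace form on `A`. -/
theorem statement17 (k : Type) [Field k] [IsAlgClosed k]
    (nV mE : ℕ) (s t : Fin mE → Fin nV) (hconn : QConnected s t)
    (I : Submodule k (PathAlg k (Fin nV) (Fin mE) s t)) (hI : IsAdmissible k s t I)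
    (hsym : IsSymmetricAlgebra' k (PathQuot k s t I))
    (hsb : SpecialBiserialPres k s t (A := PathQuot k s t I) (pathQuotMap k s t I))
    (L : List (Fin mE)) (hL : L ≠ [])
    (hu : prodPath k s t I L ≠ 0)
    (hmax : ∀ d : Fin mE, prodPath k s t I L * pathQuotMap k s t I (pA k s t d) = 0) :
    (∀ d : Fin mE, pathQuotMap k s t I (pA k s t d) * prodPath k s t I L = 0) ∧
    (s (L.head hL) = t (L.getLast hL)) ∧
    (∀ (L' : List (Fin mE)) (hL' : L' ≠ []), prodPath k s t I L' ≠ 0 →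
      (∀ d : Fin mE, prodPath k s t I L' * pathQuotMap k s t I (pA k s t d) = 0) →
      L.head hL = L'.head hL' → L = L') ∧
    (∀ (L' : List (Fin mE)) (hL' : L' ≠ []), prodPath k s t I L' ≠ 0 →
      (∀ d : Fin mE, prodPath k s t I L' * pathQuotMap k s t I (pA k s t d) = 0) →
      s (L'.head hL') = s (L.head hL) →
      ∃ c : k, c ≠ 0 ∧ prodPath k s t I L = c • prodPath k s t I L') ∧
    (∀ Tr : PathQuot k s t I →ₗ[k] k,
      (∀ a b : PathQuot k s t I, Tr (a * b) = Tr (b * a)) →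
      (∀ a : PathQuot k s t I, a ≠ 0 → ∃ b : PathQuot k s t I, Tr (a * b) ≠ 0) →
      Tr (prodPath k s t I L) ≠ 0) := by
  have hgeneral := statement17_general (pathQuotMap k s t I) (RingQuot.mkAlgHom_surjective k _)
    hsym hsb.2.2.1 L hL
  obtain ⟨hleft, hcycle, hunique, hproportional, htrace⟩ := hgeneral hu hmax
  exact ⟨hleft, hcycle, hunique, hproportional, fun Tr _ => htrace Tr⟩

end
end QH
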